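/- arXiv:2501.10994 — 2 statements merged into one kernel-verified Lean document; each statement's English description precedes it below -/
import Mathlib

section
/- Let μ be a Borel measure on S, let D ⊆ S be Borel, and let t_0, c > 0. If ∫_0^{t_0} ∫_D p_s(x,y) μ(dy) ds ≤ c for m-a.e. x ∈ S, then in fact ∫_0^{t_0} ∫_D p_s(x,y) μ(dy) ds ≤ c for every x ∈ S; in particular sup_{x ∈ S} ∫_0^{t_0} ∫_D p_s(x,y) μ(dy) ds ≤ c. -/
open MeasureTheory ENNReal Set Filter Topology

/-!
Chapman–Kolmogorov at time `ε`, Tonelli and the sub-Markov property bound the part of the potential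
at `x` coming from `(ε, t₀)` by `∫ p_ε(x, z) U(z) m(dz) ≤ c`, where `U` is the truncated potential;
let `ε → 0`.

Tonelli needs an s-finite measure, but `μ` is arbitrary. Call `(s, z)` good if `p_s(z, ·)` has
finite `μ`-integral. Since `U < ∞` almost everywhere, each `y` with `p_u(x, y) ≠ 0` for some `u`,
`x` lies in the support of some good `p_s(z, ·)`. By Chapman–Kolmogorov, for fixed `a < s` whether
`y` lies in that support depends on the support of `p_{s-a}(z, ·)` only up to `m`-null sets; as
countably many members of any family of measurable sets cover each member `m`-a.e., countably many
good pairs suffice for all `y`. On the union of their supports `μ` is s-finite, and the complement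
does not contribute to the potential.
-/

section

variable {α β ι : Type*} [MeasurableSpace α] [MeasurableSpace β]

theorem exists_countable_forall_measure_diff_biUnion_eq_zero (μ : Measure α) [SFinite μ]
    {F : Set ι} {H : ι → Set α} (hH : ∀ i ∈ F, MeasurableSet (H i)) :
    ∃ T ⊆ F, T.Countable ∧ ∀ i ∈ F, μ (H i \ ⋃ j ∈ T, H j) = 0 := by
  let ν := μ.toFinite
  let V : Set ℝ≥0∞ := (fun T : Set ι => ν (⋃ j ∈ T, H j)) '' {T | T ⊆ F ∧ T.Countable}
  have hV : V.Nonempty := ⟨_, ∅, ⟨empty_subset _, countable_empty⟩, rfl⟩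
  obtain ⟨u, -, hu, huV⟩ := exists_seq_tendsto_sSup hV (OrderTop.bddAbove V)
  choose T hT hTu using huV
  have hTF : ⋃ n, T n ⊆ F := iUnion_subset fun n => (hT n).1
  have hTc : (⋃ n, T n).Countable := countable_iUnion fun n => (hT n).2
  have hmax : sSup V ≤ ν (⋃ j ∈ ⋃ n, T n, H j) := le_of_tendsto' hu fun n =>
    (hTu n).symm.trans_le (measure_mono (biUnion_subset_biUnion_left (subset_iUnion T n)))
  refine ⟨⋃ n, T n, hTF, hTc, fun i hi => absolutelyContinuous_toFinite μ ?_⟩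
  have hinsert : ν (⋃ j ∈ insert i (⋃ n, T n), H j) ≤ sSup V :=
    le_sSup ⟨_, ⟨insert_subset hi hTF, hTc.insert i⟩, rfl⟩
  have hmeas : MeasurableSet (H i \ ⋃ j ∈ ⋃ n, T n, H j) :=
    (hH i hi).diff (.biUnion hTc fun j hj => hH j (hTF hj))
  rw [biUnion_insert, union_comm, ← union_sdiff_self,
    measure_union disjoint_sdiff_right hmeas] at hinsert
  by_contra hne
  exact (ENNReal.lt_add_right (measure_ne_top _ _) hne).not_ge (hinsert.trans hmax)

theorem sFinite_restrict_biUnion_support (μ : Measure α) {T : Set ι} (hT : T.Countable)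
    {f : ι → α → ℝ≥0∞} (hf : ∀ i ∈ T, AEMeasurable (f i) μ) (hfin : ∀ i ∈ T, ∫⁻ a, f i a ∂μ ≠ ∞) :
    SFinite (μ.restrict (⋃ i ∈ T, (f i).support)) := by
  have : Countable T := hT.to_subtype
  have (i : T) : IsFiniteMeasure (μ.withDensity (f i)) :=
    isFiniteMeasure_withDensity (hfin i i.2)
  have hac : μ.restrict (⋃ i ∈ T, (f i).support) ≪
      Measure.sum fun i : T => μ.withDensity (f i) := by
    refine Measure.AbsolutelyContinuous.mk fun s hs h => ?_
    rw [Measure.sum_apply_eq_zero] at h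
    rw [Measure.restrict_apply hs, inter_iUnion₂, measure_biUnion_null_iff hT]
    intro i hi
    rw [inter_comm]
    exact (withDensity_apply_eq_zero' (hf i hi)).1 (h ⟨i, hi⟩)
  exact sFinite_of_absolutelyContinuous hac

theorem exists_mem_ne_top_of_setLIntegral_ne_top {μ : Measure α} {s : Set α}
    (hs : MeasurableSet s) (hμs : μ s ≠ 0) {f : α → ℝ≥0∞} (hf : ∫⁻ a in s, f a ∂μ ≠ ∞) :
    ∃ a ∈ s, f a ≠ ∞ := by
  by_contra! htop
  refine hf ?_
  rw [setLIntegral_congr_fun hs htop, setLIntegral_const, top_mul hμs]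

theorem frequently_ae_frequently_ae_comm {μ : Measure α} {ν : Measure β} [SFinite μ] [SFinite ν]
    {P : α → β → Prop} (hP : MeasurableSet {q : α × β | P q.1 q.2}) :
    (∃ᵐ a ∂μ, ∃ᵐ b ∂ν, P a b) ↔ ∃ᵐ b ∂ν, ∃ᵐ a ∂μ, P a b := by
  simpa only [not_eventually, not_not] using
    (Measure.ae_ae_comm (μ := μ) (ν := ν) (p := fun a b => ¬P a b) hP.compl).not

theorem setLIntegral_Ioo_le_of_forall_gt {a b : ℝ} {f : ℝ → ℝ≥0∞} {C : ℝ≥0∞} {μ : Measure ℝ}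
    (h : ∀ a' > a, ∫⁻ s in Ioo a' b, f s ∂μ ≤ C) : ∫⁻ s in Ioo a b, f s ∂μ ≤ C := by
  obtain ⟨u, hu_anti, hu_gt, hu_lim⟩ := exists_seq_strictAnti_tendsto a
  rw [← iUnion_Ioo_of_mono_of_isGLB_of_isLUB hu_anti.antitone (monotone_const (c := b))
      (isGLB_of_tendsto_atTop hu_anti.antitone hu_lim) (by simp),
    setLIntegral_iUnion_of_directed]
  · exact iSup_le fun n => h _ (hu_gt n)
  · exact Monotone.directed_le fun m n hmn => Ioo_subset_Ioo_left (hu_anti.antitone hmn)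

theorem setLIntegral_Ioo_comp_const_add (f : ℝ → ℝ≥0∞) (a b c : ℝ) :
    ∫⁻ s in Ioo a b, f (c + s) = ∫⁻ s in Ioo (c + a) (c + b), f s := by
  have h := (measurePreserving_add_left volume c).setLIntegral_comp_preimage_emb
    (measurableEmbedding_addLeft c) f (Ioo (c + a) (c + b))
  simpa using h

end

section

variable {S : Type*} [MeasurableSpace S] {m ν : Measure S} {p : ℝ → S → S → ℝ≥0∞}
  {s t t₀ : ℝ} {x y : S}

/-- A transition density `p_t(x, y)`, `t > 0`, with respect to `m`: a jointly measurable function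
satisfying the Chapman–Kolmogorov equation. The values at times `t ≤ 0` have no meaning. -/
structure IsTransitionDensity (m : Measure S) (p : ℝ → S → S → ℝ≥0∞) : Prop where
  measurable : Measurable fun q : ℝ × S × S => p q.1 q.2.1 q.2.2
  chapmanKolmogorov : ∀ s > (0 : ℝ), ∀ t > (0 : ℝ), ∀ x y : S,
    p (t + s) x y = ∫⁻ z, p t x z * p s z y ∂m

/-- The potential `∫_0^{t₀} ∫ p_s(x, y) ν(dy) ds` of `ν` truncated at time `t₀`. If `ν` is not
s-finite, the inner integral need not be measurable in `s`, and the outer one is a lower integral.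
-/
noncomputable def truncatedPotential (p : ℝ → S → S → ℝ≥0∞) (ν : Measure S) (t₀ : ℝ) (x : S) :
    ℝ≥0∞ :=
  ∫⁻ s in Ioo 0 t₀, ∫⁻ y, p s x y ∂ν

theorem truncatedPotential_restrict_of_support_subset {A : Set S}
    (hA : ∀ s ∈ Ioo 0 t₀, (p s x).support ⊆ A) :
    truncatedPotential p (ν.restrict A) t₀ x = truncatedPotential p ν t₀ x :=
  setLIntegral_congr_fun measurableSet_Ioo fun s hs => setLIntegral_eq_of_support_subset (hA s hs)

namespace IsTransitionDensity

theorem measurable_comp (hp : IsTransitionDensity m p) {α : Type*} [MeasurableSpace α]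
    {τ : α → ℝ} {f g : α → S} (hτ : Measurable τ) (hf : Measurable f) (hg : Measurable g) :
    Measurable fun a => p (τ a) (f a) (g a) :=
  hp.measurable.comp (hτ.prodMk (hf.prodMk hg))

theorem measurable_right (hp : IsTransitionDensity m p) (t : ℝ) (x : S) : Measurable (p t x) :=
  hp.measurable_comp measurable_const measurable_const measurable_id

theorem measurable_lintegral (hp : IsTransitionDensity m p) [SFinite ν] :
    Measurable fun q : ℝ × S => ∫⁻ y, p q.1 q.2 y ∂ν :=
  (hp.measurable_comp (by fun_prop) (by fun_prop) measurable_snd :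
    Measurable fun r : (ℝ × S) × S => p r.1.1 r.1.2 r.2).lintegral_prod_right'

theorem add_ne_zero_iff (hp : IsTransitionDensity m p) (ht : 0 < t) (hs : 0 < s) :
    p (t + s) x y ≠ 0 ↔ ∃ᵐ z ∂m, p t x z ≠ 0 ∧ p s z y ≠ 0 := by
  have hmeas : Measurable fun z => p t x z * p s z y :=
    (hp.measurable_right t x).mul
      (hp.measurable_comp measurable_const measurable_id measurable_const)
  rw [hp.chapmanKolmogorov s hs t ht, Ne, lintegral_eq_zero_iff hmeas, EventuallyEq, not_eventually]
  simp

theorem lintegral_add [SFinite m] [SFinite ν] (hp : IsTransitionDensity m p) (ht : 0 < t)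
    (hs : 0 < s) (x : S) :
    ∫⁻ y, p (t + s) x y ∂ν = ∫⁻ z, p t x z * ∫⁻ y, p s z y ∂ν ∂m := by
  simp_rw [hp.chapmanKolmogorov s hs t ht x]
  rw [lintegral_lintegral_swap]
  · exact lintegral_congr fun z => lintegral_const_mul _ (hp.measurable_right s z)
  · exact (((hp.measurable_right t x).comp measurable_snd).mul
      (hp.measurable_comp measurable_const measurable_snd measurable_fst)).aemeasurable

theorem setLIntegral_Ioo_le_lintegral_mul_truncatedPotential [SFinite m] [SFinite ν]
    (hp : IsTransitionDensity m p) {ε : ℝ} (hε : 0 < ε) (t₀ : ℝ) (x : S) :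
    ∫⁻ s in Ioo ε t₀, ∫⁻ y, p s x y ∂ν ≤ ∫⁻ z, p ε x z * truncatedPotential p ν t₀ z ∂m := by
  have hU := hp.measurable_lintegral (ν := ν)
  calc ∫⁻ s in Ioo ε t₀, ∫⁻ y, p s x y ∂ν
      = ∫⁻ s in Ioo 0 (t₀ - ε), ∫⁻ y, p (ε + s) x y ∂ν := by
        simp [setLIntegral_Ioo_comp_const_add (fun s => ∫⁻ y, p s x y ∂ν)]
    _ ≤ ∫⁻ s in Ioo 0 t₀, ∫⁻ y, p (ε + s) x y ∂ν :=
        lintegral_mono_set (Ioo_subset_Ioo_right (by linarith))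
    _ = ∫⁻ s in Ioo 0 t₀, ∫⁻ z, p ε x z * ∫⁻ y, p s z y ∂ν ∂m :=
        setLIntegral_congr_fun measurableSet_Ioo fun s hs => hp.lintegral_add hε hs.1 x
    _ = ∫⁻ z, (∫⁻ s in Ioo 0 t₀, p ε x z * ∫⁻ y, p s z y ∂ν) ∂m :=
        lintegral_lintegral_swap
          (((hp.measurable_right ε x).comp measurable_snd).mul hU).aemeasurable
    _ = ∫⁻ z, p ε x z * truncatedPotential p ν t₀ z ∂m :=
        lintegral_congr fun z => lintegral_const_mul _ (hU.comp measurable_prodMk_right)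

theorem truncatedPotential_le_of_ae_le [SFinite m] [SFinite ν] (hp : IsTransitionDensity m p)
    (hsub : ∀ t > (0 : ℝ), ∫⁻ y, p t x y ∂m ≤ 1) {C : ℝ≥0∞}
    (hae : ∀ᵐ z ∂m, truncatedPotential p ν t₀ z ≤ C) : truncatedPotential p ν t₀ x ≤ C :=
  setLIntegral_Ioo_le_of_forall_gt fun ε hε => calc
    ∫⁻ s in Ioo ε t₀, ∫⁻ y, p s x y ∂ν
      ≤ ∫⁻ z, p ε x z * truncatedPotential p ν t₀ z ∂m :=
        hp.setLIntegral_Ioo_le_lintegral_mul_truncatedPotential hε t₀ x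
    _ ≤ ∫⁻ z, p ε x z * C ∂m :=
        lintegral_mono_ae (hae.mono fun _ hz => mul_le_mul_right hz _)
    _ = (∫⁻ z, p ε x z ∂m) * C :=
        lintegral_mul_const _ (hp.measurable_right ε x)
    _ ≤ C := mul_le_of_le_one_left' (hsub ε hε)

theorem exists_countable_support_subset_biUnion_of_lt [SFinite m] (hp : IsTransitionDensity m p)
    {a : ℝ} (ha : 0 < a) {F : Set (ℝ × S)} (hF : ∀ q ∈ F, a < q.1) :
    ∃ T ⊆ F, T.Countable ∧ ∀ q ∈ F, (p q.1 q.2).support ⊆ ⋃ r ∈ T, (p r.1 r.2).support := by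
  obtain ⟨T, hTF, hTc, hT⟩ := exists_countable_forall_measure_diff_biUnion_eq_zero m
    (F := F) (H := fun q => (p (q.1 - a) q.2).support)
    fun q _ => measurableSet_support (hp.measurable_right _ _)
  have hsplit (q) (hq : q ∈ F) (y : S) :
      p q.1 q.2 y ≠ 0 ↔ ∃ᵐ w ∂m, p (q.1 - a) q.2 w ≠ 0 ∧ p a w y ≠ 0 := by
    rw [← hp.add_ne_zero_iff (sub_pos.2 (hF q hq)) ha, sub_add_cancel]
  refine ⟨T, hTF, hTc, fun q hq y hy => ?_⟩
  by_contra hyT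
  have hTy : ∀ᵐ w ∂m, ∀ r ∈ T, ¬(p (r.1 - a) r.2 w ≠ 0 ∧ p a w y ≠ 0) :=
    (ae_ball_iff hTc).2 fun r hr => not_frequently.1 fun h =>
      hyT (mem_biUnion hr ((hsplit r (hTF hr) y).2 h))
  obtain ⟨w, ⟨hqw, hwy⟩, hwT, hw⟩ := (((hsplit q hq y).1 hy).and_eventually
    (hTy.and (measure_eq_zero_iff_ae_notMem.1 (hT q hq)))).exists
  refine hw ⟨hqw, fun hmem => ?_⟩
  obtain ⟨r, hr, hrw⟩ := mem_iUnion₂.1 hmem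
  exact hwT r hr ⟨hrw, hwy⟩

theorem exists_countable_support_subset_biUnion [SFinite m] (hp : IsTransitionDensity m p)
    {F : Set (ℝ × S)} (hF : ∀ q ∈ F, 0 < q.1) :
    ∃ T ⊆ F, T.Countable ∧ ∀ q ∈ F, (p q.1 q.2).support ⊆ ⋃ r ∈ T, (p r.1 r.2).support := by
  choose T hTF hTc hT using fun n : ℕ => hp.exists_countable_support_subset_biUnion_of_lt
    (Nat.one_div_pos_of_nat (n := n)) (F := {q ∈ F | 1 / ((n : ℝ) + 1) < q.1}) fun q hq => hq.2
  refine ⟨⋃ n, T n, iUnion_subset fun n => (hTF n).trans (sep_subset _ _), countable_iUnion hTc,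
    fun q hq => ?_⟩
  obtain ⟨n, hn⟩ := exists_nat_one_div_lt (hF q hq)
  exact (hT n q ⟨hq, hn⟩).trans (biUnion_subset_biUnion_left (subset_iUnion T n))

theorem frequently_frequently_ne_zero [SFinite m] (hp : IsTransitionDensity m p) (ht₀ : 0 < t₀)
    (ht : 0 < t) (hxy : p t x y ≠ 0) :
    ∃ᵐ z ∂m, ∃ᵐ s ∂volume.restrict (Ioo 0 t₀), p s z y ≠ 0 := by
  have hpos : ∀ s ∈ Ioo 0 t, ∃ᵐ z ∂m, p s z y ≠ 0 := fun s hs =>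
    ((hp.add_ne_zero_iff (sub_pos.2 hs.2) hs.1).1 (by rwa [sub_add_cancel])).mono fun _ => And.right
  have hfreq : ∃ᵐ s ∂volume.restrict (Ioo 0 t₀), s ∈ Ioo 0 t := by
    rw [frequently_ae_mem_iff, Measure.restrict_apply measurableSet_Ioo, Ioo_inter_Ioo]
    simp [ht, ht₀]
  refine (frequently_ae_frequently_ae_comm ?_).2 (hfreq.mono hpos)
  exact measurableSet_support (hp.measurable_comp measurable_snd measurable_fst measurable_const)

theorem exists_lintegral_ne_top_of_ne_zero [SFinite m] (hp : IsTransitionDensity m p)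
    (ht₀ : 0 < t₀) (hfin : ∀ᵐ z ∂m, truncatedPotential p ν t₀ z ≠ ∞) (ht : 0 < t)
    (hxy : p t x y ≠ 0) :
    ∃ s > 0, ∃ z, ∫⁻ w, p s z w ∂ν ≠ ∞ ∧ p s z y ≠ 0 := by
  obtain ⟨z, hz, hzfin⟩ :=
    ((hp.frequently_frequently_ne_zero ht₀ ht hxy).and_eventually hfin).exists
  have hmeas : MeasurableSet {s | p s z y ≠ 0} := measurableSet_support
    (hp.measurable_comp measurable_id measurable_const measurable_const)
  have hpos : volume ({s | p s z y ≠ 0} ∩ Ioo 0 t₀) ≠ 0 := by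
    rwa [frequently_ae_iff, Measure.restrict_apply hmeas] at hz
  obtain ⟨s, hs, hsfin⟩ := exists_mem_ne_top_of_setLIntegral_ne_top
    (hmeas.inter measurableSet_Ioo) hpos
    (ne_top_of_le_ne_top hzfin (lintegral_mono_set inter_subset_right))
  exact ⟨s, hs.2.1, z, hsfin, hs.1⟩

theorem exists_sFinite_restrict_support_subset [SFinite m] (hp : IsTransitionDensity m p)
    (ht₀ : 0 < t₀) (hfin : ∀ᵐ z ∂m, truncatedPotential p ν t₀ z ≠ ∞) :
    ∃ A, SFinite (ν.restrict A) ∧ ∀ t > 0, ∀ x, (p t x).support ⊆ A := by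
  obtain ⟨T, hTF, hTc, hT⟩ := hp.exists_countable_support_subset_biUnion
    (F := {q | 0 < q.1 ∧ ∫⁻ y, p q.1 q.2 y ∂ν ≠ ∞}) fun q hq => hq.1
  refine ⟨⋃ q ∈ T, (p q.1 q.2).support, sFinite_restrict_biUnion_support ν hTc
    (fun q _ => (hp.measurable_right _ _).aemeasurable) fun q hq => (hTF hq).2,
    fun t ht x y hxy => ?_⟩
  obtain ⟨s, hs, z, hsz, hzy⟩ := hp.exists_lintegral_ne_top_of_ne_zero ht₀ hfin ht hxy
  exact hT (s, z) ⟨hs, hsz⟩ hzy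

end IsTransitionDensity

theorem truncated_potential_ae_bound_to_pointwise_general [SFinite m]
    (hp : IsTransitionDensity m p) {C : ℝ≥0∞} (hae : ∀ᵐ z ∂m, truncatedPotential p ν t₀ z ≤ C)
    (hsub : ∀ t > (0 : ℝ), ∫⁻ y, p t x y ∂m ≤ 1) :
    truncatedPotential p ν t₀ x ≤ C := by
  obtain rfl | hC := eq_or_ne C ∞
  · exact le_top
  obtain ht₀ | ht₀ := le_or_gt t₀ 0
  · simp [truncatedPotential, Ioo_eq_empty ht₀.not_gt]
  obtain ⟨A, hνA, hsupp⟩ := hp.exists_sFinite_restrict_support_subset ht₀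
    (hae.mono fun z hz => ne_top_of_le_ne_top hC hz)
  have hrestrict (z : S) : truncatedPotential p (ν.restrict A) t₀ z = truncatedPotential p ν t₀ z :=
    truncatedPotential_restrict_of_support_subset fun s hs => hsupp s hs.1 z
  simp_rw [← hrestrict] at hae ⊢
  exact hp.truncatedPotential_le_of_ae_le hsub hae

end

/-- Let `μ` be a Borel measure on `S`, `D ⊆ S` Borel, and `t_0, c > 0`. If
`∫_0^{t_0} ∫_D p_s(x,y) μ(dy) ds ≤ c` for `m`-a.e. `x ∈ S`, then the same bound holds for
every `x ∈ S`; in particular `sup_{x ∈ S} ∫_0^{t_0} ∫_D p_s(x,y) μ(dy) ds ≤ c`. -/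
theorem truncated_potential_ae_bound_to_pointwise
    {S : Type*} [TopologicalSpace S] [LocallyCompactSpace S]
    [TopologicalSpace.SeparableSpace S] [TopologicalSpace.MetrizableSpace S]
    [MeasurableSpace S] [BorelSpace S]
    (m : Measure S) [SigmaFinite m] [IsFiniteMeasureOnCompacts m]
    (hfull : ∀ U : Set S, IsOpen U → U.Nonempty → 0 < m U)
    (p : ℝ → S → S → ℝ≥0∞)
    (hp_meas : Measurable fun q : ℝ × S × S => p q.1 q.2.1 q.2.2)
    (hsymm : ∀ t > (0 : ℝ), ∀ x y : S, p t x y = p t y x)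
    (hCK : ∀ s > (0 : ℝ), ∀ t > (0 : ℝ), ∀ x y : S,
      p (t + s) x y = ∫⁻ z, p t x z * p s z y ∂m)
    (hsub : ∀ t > (0 : ℝ), ∀ x : S, (∫⁻ y, p t x y ∂m) ≤ 1)
    (μ : Measure S) (D : Set S) (hD : MeasurableSet D)
    (t₀ c : ℝ) (ht₀ : 0 < t₀) (hc : 0 < c)
    (hae : ∀ᵐ x ∂m,
      (∫⁻ s in Set.Ioo (0 : ℝ) t₀, ∫⁻ y in D, p s x y ∂μ) ≤ ENNReal.ofReal c) :
    (∀ x : S,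
      (∫⁻ s in Set.Ioo (0 : ℝ) t₀, ∫⁻ y in D, p s x y ∂μ) ≤ ENNReal.ofReal c)
    ∧ (⨆ x : S, ∫⁻ s in Set.Ioo (0 : ℝ) t₀, ∫⁻ y in D, p s x y ∂μ)
        ≤ ENNReal.ofReal c := by
  have hp : IsTransitionDensity m p := ⟨hp_meas, hCK⟩
  have hbound (x : S) : truncatedPotential p (μ.restrict D) t₀ x ≤ ENNReal.ofReal c :=
    truncated_potential_ae_bound_to_pointwise_general hp hae fun t ht => hsub t ht x
  exact ⟨hbound, iSup_le hbound⟩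
end

section
/- Assume: (B1) p is jointly continuous on (0,∞) × S × S with values in [0,∞); (B2) μ, μ_1, μ_2, … are Radon measures on S with μ_n → μ vaguely; (B3) for every compact K ⊆ S, lim_{t→0} sup_{n ≥ 1} sup_{x ∈ K} ∫_0^t ∫_K p_s(x,y) μ_n(dy) ds = 0. Then there exists an increasing sequence (V_k)_{k ≥ 1} of relatively compact open subsets of S with ∪_{k ≥ 1} V_k = S such that for every k ≥ 1, lim_{n→∞} sup_{x ∈ closure(V_k)} |G_1μ_n^{V_k}(x) − G_1μ^{V_k}(x)| = 0, where ν^{V}(dy) := 1_V(y) ν(dy) denotes the restriction of a measure ν to V; in particular, lim_{n→∞} ∥G_1μ_n^{V_k} − G_1μ^{V_k}∥_{L^∞(μ_n^{V_k}+μ^{V_k})} = 0 for every k ≥ 1. -/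
open MeasureTheory ENNReal Set Filter Topology

/-- The `α`-potential density `R_α(x,y) = ∫_0^∞ e^{-αt} p_t(x,y) dt`. -/
noncomputable def potDensity {S : Type*} (p : ℝ → S → S → ℝ≥0∞) (α : ℝ) (x y : S) : ℝ≥0∞ :=
  ∫⁻ t in Set.Ioi (0 : ℝ), ENNReal.ofReal (Real.exp (-α * t)) * p t x y

/-- The `α`-potential `G_αμ(x) = ∫_S R_α(x,y) μ(dy)` of a Borel measure `μ`. -/
noncomputable def potential {S : Type*} [MeasurableSpace S]
    (p : ℝ → S → S → ℝ≥0∞) (α : ℝ) (μ : Measure S) (x : S) : ℝ≥0∞ :=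
  ∫⁻ y, potDensity p α x y ∂μ

/-!
Cut the potential at a small time `δ`. The contribution of the times in `(0, δ)` is small uniformly
in `n` by (B3), and Fatou's lemma passes this bound on to the limit measure. The contribution of the
times in `[δ, ∞)` has a finite, jointly continuous density: factoring
`p_u = p_{v/2} p_{u-v} p_{v/2}` and applying the Schur test to `p_{u-v}` gives
`2 p_u(x,y) ≤ p_v(x,x) + p_v(y,y)` for `u > v`, so dominated convergence applies. For a relatively
compact `V` with `μ`-null frontier, vague convergence and the portmanteau theorem then give
pointwise convergence of the tail potentials of the measures restricted to `V`, and equicontinuity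
makes it uniform on compact sets. Metric thickenings of the members of a compact exhaustion provide
such sets `V`.
-/

section EDist

lemma ennreal_edist_eq_max_tsub (a b : ℝ≥0∞) : edist a b = max (a - b) (b - a) := by
  by_cases h : a = ⊤ ∨ b = ⊤
  · by_cases hab : a = b
    · rw [hab, tsub_self, max_self, WeakPseudoEMetricSpace.edist_self]
    · rw [(edist_eq_top_iff a b).2 ⟨hab, h⟩]
      rcases h with rfl | rfl <;> simp [top_sub, Ne.symm hab, hab]
  · push Not at h
    lift a to NNReal using h.1
    lift b to NNReal using h.2
    have : edist (a : ℝ≥0∞) b = edist a b := rfl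
    rw [this, edist_nndist, NNReal.nndist_eq]
    push_cast
    rfl

lemma ennreal_edist_le_max (a b : ℝ≥0∞) : edist a b ≤ max a b := by
  rw [ennreal_edist_eq_max_tsub]
  exact max_le_max tsub_le_self tsub_le_self

lemma ennreal_edist_add_add_le (a b c d : ℝ≥0∞) :
    edist (a + b) (c + d) ≤ edist a c + edist b d := by
  simp only [ennreal_edist_eq_max_tsub]
  exact max_le
    (add_tsub_add_le_tsub_add_tsub.trans (add_le_add (le_max_left _ _) (le_max_left _ _)))
    (add_tsub_add_le_tsub_add_tsub.trans (add_le_add (le_max_right _ _) (le_max_right _ _)))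

lemma tendsto_ennreal_edist_zero {ι : Type*} {l : Filter ι} {f g : ι → ℝ≥0∞} {a : ℝ≥0∞}
    (hf : Tendsto f l (𝓝 a)) (hg : Tendsto g l (𝓝 a)) (ha : a ≠ ⊤) :
    Tendsto (fun i => edist (f i) (g i)) l (𝓝 0) := by
  simp only [ennreal_edist_eq_max_tsub]
  simpa using
    (ENNReal.Tendsto.sub hf hg (.inl ha)).max (ENNReal.Tendsto.sub hg hf (.inl ha))

lemma edist_lintegral_le_lintegral_edist {S : Type*} [MeasurableSpace S] {ν : Measure S}
    {f g : S → ℝ≥0∞} (hf : Measurable f) (hg : Measurable g) :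
    edist (∫⁻ y, f y ∂ν) (∫⁻ y, g y ∂ν) ≤ ∫⁻ y, edist (f y) (g y) ∂ν := by
  simp only [ennreal_edist_eq_max_tsub]
  exact max_le
    ((lintegral_sub_le g f hg).trans (lintegral_mono fun _ => le_max_left _ _))
    ((lintegral_sub_le f g hf).trans (lintegral_mono fun _ => le_max_right _ _))

lemma edist_setLIntegral_le_biSup_mul {S : Type*} [MeasurableSpace S] (ν : Measure S)
    {V K : Set S} (hV : MeasurableSet V) (hVK : V ⊆ K) {f g : S → ℝ≥0∞}
    (hf : Measurable f) (hg : Measurable g) :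
    edist (∫⁻ y in V, f y ∂ν) (∫⁻ y in V, g y ∂ν) ≤ (⨆ y ∈ K, edist (f y) (g y)) * ν V :=
  calc
    edist (∫⁻ y in V, f y ∂ν) (∫⁻ y in V, g y ∂ν)
        ≤ ∫⁻ y in V, edist (f y) (g y) ∂ν := edist_lintegral_le_lintegral_edist hf hg
    _ ≤ ∫⁻ _ in V, ⨆ y ∈ K, edist (f y) (g y) ∂ν :=
        setLIntegral_mono' hV fun y hy => le_iSup₂ (f := fun y _ => edist (f y) (g y)) y (hVK hy)
    _ = (⨆ y ∈ K, edist (f y) (g y)) * ν V := setLIntegral_const _ _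

lemma edist_setLIntegral_le_add_edist_add {S : Type*} [MeasurableSpace S] (ν ν' : Measure S)
    {V K : Set S} (hV : MeasurableSet V) (hVK : V ⊆ K) {f g : S → ℝ≥0∞}
    (hf : Measurable f) (hg : Measurable g) :
    edist (∫⁻ y in V, f y ∂ν) (∫⁻ y in V, f y ∂ν') ≤
      (⨆ y ∈ K, edist (f y) (g y)) * ν V +
        edist (∫⁻ y in V, g y ∂ν) (∫⁻ y in V, g y ∂ν') +
        (⨆ y ∈ K, edist (f y) (g y)) * ν' V :=
  calc
    edist (∫⁻ y in V, f y ∂ν) (∫⁻ y in V, f y ∂ν')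
        ≤ edist (∫⁻ y in V, f y ∂ν) (∫⁻ y in V, g y ∂ν) +
          edist (∫⁻ y in V, g y ∂ν) (∫⁻ y in V, g y ∂ν') +
          edist (∫⁻ y in V, g y ∂ν') (∫⁻ y in V, f y ∂ν') :=
        (WeakPseudoEMetricSpace.edist_triangle _ _ _).trans
          (add_le_add_left (WeakPseudoEMetricSpace.edist_triangle _ _ _) _)
    _ ≤ _ := by
        rw [WeakPseudoEMetricSpace.edist_comm (∫⁻ y in V, g y ∂ν')]
        gcongr <;> exact edist_setLIntegral_le_biSup_mul _ hV hVK hf hg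

end EDist

section CompactSup

variable {X : Type*} [TopologicalSpace X]

lemma tendsto_biSup_zero_of_isCompact {ι : Type*} {l : Filter ι} {K : Set X} (hK : IsCompact K)
    {d : ι → X → ℝ≥0∞}
    (hd : ∀ x ∈ K, Tendsto (fun q : ι × X => d q.1 q.2) (l ×ˢ 𝓝 x) (𝓝 0)) :
    Tendsto (fun i => ⨆ x ∈ K, d i x) l (𝓝 0) := by
  refine ENNReal.tendsto_nhds_zero.2 fun ε hε => ?_
  have hev : ∀ᶠ q : ι × X in l ×ˢ 𝓝ˢ K, d q.1 q.2 ≤ ε :=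
    hK.mem_prod_nhdsSet_of_forall fun x hx => ENNReal.tendsto_nhds_zero.1 (hd x hx) ε hε
  filter_upwards [hev.curry] with i hi
  exact iSup₂_le fun x hx => subset_of_mem_nhdsSet hi hx

lemma tendsto_biSup_edist_of_continuous {S : Type*} [TopologicalSpace S] {L : Set S}
    (hL : IsCompact L) {F : X → S → ℝ≥0∞} (hF : Continuous (Function.uncurry F))
    (hfin : ∀ x y, F x y ≠ ⊤) (x₀ : X) :
    Tendsto (fun x => ⨆ y ∈ L, edist (F x y) (F x₀ y)) (𝓝 x₀) (𝓝 0) := by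
  refine tendsto_biSup_zero_of_isCompact hL fun y₀ _ => ?_
  rw [← nhds_prod_eq]
  have hfst : Continuous fun q : X × S => F q.1 q.2 := hF
  have hsnd : Continuous fun q : X × S => F x₀ q.2 :=
    hF.comp (continuous_const.prodMk continuous_snd)
  exact tendsto_ennreal_edist_zero (hfst.tendsto (x₀, y₀)) (hsnd.tendsto (x₀, y₀)) (hfin x₀ y₀)

end CompactSup

section Vague

lemma tendsto_measure_of_null_frontier_of_tendsto_finiteMeasure {Ω ι : Type*}
    [MeasurableSpace Ω] [TopologicalSpace Ω] [OpensMeasurableSpace Ω] [HasOuterApproxClosed Ω]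
    {l : Filter ι} {ν : FiniteMeasure Ω} {νs : ι → FiniteMeasure Ω} (h : Tendsto νs l (𝓝 ν))
    {E : Set Ω} (hE : ν (frontier E) = 0) :
    Tendsto (fun i => νs i E) l (𝓝 (ν E)) := by
  rcases eq_or_ne ν 0 with rfl | hν
  · have hmass : Tendsto (fun i => (νs i).mass) l (𝓝 0) := by simpa using h.mass
    simpa using tendsto_of_tendsto_of_tendsto_of_le_of_le tendsto_const_nhds hmass
      (fun _ => zero_le) fun i => (νs i).apply_le_mass E
  · have : Nonempty Ω := not_isEmpty_iff.1 fun _ =>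
      hν (FiniteMeasure.eq_of_forall_apply_eq _ _ fun s _ => by simp [s.eq_empty_of_isEmpty])
    have hfr : ν.normalize (frontier E) = 0 := by
      rw [ν.normalize_eq_of_nonzero hν, hE, mul_zero]
    simp only [FiniteMeasure.self_eq_mass_mul_normalize _ E]
    exact h.mass.mul (ProbabilityMeasure.tendsto_measure_of_null_frontier_of_tendsto
      (FiniteMeasure.tendsto_normalize_of_tendsto h hν) hfr)

variable {S : Type*} [TopologicalSpace S] [MeasurableSpace S]

/-- Vague convergence `μs → μ` along `l`: convergence of the integrals of all continuous functions
with compact support. -/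
def VagueTendsto {ι : Type*} (μs : ι → Measure S) (l : Filter ι) (μ : Measure S) : Prop :=
  ∀ f : S → ℝ, Continuous f → HasCompactSupport f →
    Tendsto (fun i => ∫ x, f x ∂μs i) l (𝓝 (∫ x, f x ∂μ))

lemma setLIntegral_ne_top_of_continuous {μ : Measure S}
    [IsFiniteMeasureOnCompacts μ] {f : S → ℝ≥0∞} (hf : Continuous f) (hfin : ∀ y, f y ≠ ⊤)
    {V : Set S} (hVc : IsCompact (closure V)) : ∫⁻ y in V, f y ∂μ ≠ ⊤ := by
  lift f to S → NNReal using hfin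
  exact ne_top_of_le_ne_top
    (setLIntegral_lt_top_of_isCompact hVc.measure_ne_top hVc (ENNReal.continuous_coe_iff.1 hf)).ne
    (lintegral_mono_set subset_closure)

namespace VagueTendsto

variable [BorelSpace S] [TopologicalSpace.PseudoMetrizableSpace S] {ι : Type*} {l : Filter ι}
  {μs : ι → Measure S} {μ : Measure S} [∀ i, IsFiniteMeasureOnCompacts (μs i)]
  [IsFiniteMeasureOnCompacts μ]

lemma tendsto_setLIntegral_of_hasCompactSupport (h : VagueTendsto μs l μ) {g : S → NNReal}
    (hg : Continuous g) (hsupp : HasCompactSupport g) {E : Set S} (hE : MeasurableSet E)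
    (hfr : μ (frontier E) = 0) :
    Tendsto (fun i => ∫⁻ y in E, g y ∂μs i) l (𝓝 (∫⁻ y in E, g y ∂μ)) := by
  have hfin (ν : Measure S) [IsFiniteMeasureOnCompacts ν] :
      IsFiniteMeasure (ν.withDensity fun y => g y) := by
    have hint : Integrable (fun y => (g y : ℝ)) ν :=
      Continuous.integrable_of_hasCompactSupport (by fun_prop) (hsupp.comp_left NNReal.coe_zero)
    exact isFiniteMeasure_withDensity (by simpa using hint.lintegral_lt_top.ne)
  let weighted (ν : Measure S) [IsFiniteMeasureOnCompacts ν] : FiniteMeasure S :=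
    ⟨ν.withDensity fun y => g y, hfin ν⟩
  have happly (ν : Measure S) [IsFiniteMeasureOnCompacts ν] :
      (weighted ν E : ℝ≥0∞) = ∫⁻ y in E, g y ∂ν := by
    rw [FiniteMeasure.ennreal_coeFn_eq_coeFn_toMeasure, FiniteMeasure.toMeasure_mk,
      withDensity_apply _ hE]
  have hweak : Tendsto (fun i => weighted (μs i)) l (𝓝 (weighted μ)) := by
    refine FiniteMeasure.tendsto_iff_forall_integral_tendsto.2 fun φ => ?_
    simp only [weighted, FiniteMeasure.toMeasure_mk,
      integral_withDensity_eq_integral_smul hg.measurable]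
    exact h _ (by fun_prop) hsupp.smul_right
  have hfr_weighted : weighted μ (frontier E) = 0 :=
    (FiniteMeasure.null_iff_toMeasure_null _ _).2 (withDensity_absolutelyContinuous _ _ hfr)
  simpa only [← happly] using ENNReal.tendsto_coe.2
    (tendsto_measure_of_null_frontier_of_tendsto_finiteMeasure hweak hfr_weighted)

lemma tendsto_setLIntegral [LocallyCompactSpace S] (h : VagueTendsto μs l μ) {f : S → ℝ≥0∞}
    (hf : Continuous f) (hfin : ∀ y, f y ≠ ⊤) {V : Set S} (hV : MeasurableSet V)
    (hVc : IsCompact (closure V)) (hfr : μ (frontier V) = 0) :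
    Tendsto (fun i => ∫⁻ y in V, f y ∂μs i) l (𝓝 (∫⁻ y in V, f y ∂μ)) := by
  lift f to S → NNReal using hfin
  obtain ⟨χ, hχ, -, hχsupp, -⟩ :=
    exists_continuous_one_zero_of_isCompact hVc isClosed_empty (disjoint_empty _)
  let g (y : S) : NNReal := f y * (χ y).toNNReal
  have hg : Continuous g := (ENNReal.continuous_coe_iff.1 hf).mul (by fun_prop)
  have hgsupp : HasCompactSupport g := (hχsupp.comp_left Real.toNNReal_zero).mul_left
  have hgf (ν : Measure S) : ∫⁻ y in V, g y ∂ν = ∫⁻ y in V, f y ∂ν :=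
    setLIntegral_congr_fun hV fun y hy => by simp [g, hχ (subset_closure hy)]
  simpa only [hgf] using h.tendsto_setLIntegral_of_hasCompactSupport hg hgsupp hV hfr

lemma tendsto_measure [LocallyCompactSpace S] (h : VagueTendsto μs l μ) {V : Set S}
    (hV : MeasurableSet V) (hVc : IsCompact (closure V)) (hfr : μ (frontier V) = 0) :
    Tendsto (fun i => μs i V) l (𝓝 (μ V)) := by
  simpa using h.tendsto_setLIntegral (f := 1) continuous_const (by simp) hV hVc hfr

lemma tendsto_biSup_edist_setLIntegral [LocallyCompactSpace S] {X : Type*} [TopologicalSpace X]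
    (h : VagueTendsto μs l μ) {F : X → S → ℝ≥0∞} (hF : Continuous (Function.uncurry F))
    (hfin : ∀ x y, F x y ≠ ⊤) {V : Set S} (hV : MeasurableSet V) (hVc : IsCompact (closure V))
    (hfr : μ (frontier V) = 0) {K : Set X} (hK : IsCompact K) :
    Tendsto (fun i => ⨆ x ∈ K, edist (∫⁻ y in V, F x y ∂μs i) (∫⁻ y in V, F x y ∂μ)) l
      (𝓝 0) := by
  refine tendsto_biSup_zero_of_isCompact hK fun x₀ _ => ?_
  have hFx (x : X) : Continuous (F x) := hF.comp (Continuous.prodMk_right x)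
  have hμV : μ V ≠ ⊤ := measure_ne_top_of_subset subset_closure hVc.measure_ne_top
  let η (x : X) : ℝ≥0∞ := ⨆ y ∈ closure V, edist (F x y) (F x₀ y)
  have hη0 : Tendsto (fun q : ι × X => η q.2) (l ×ˢ 𝓝 x₀) (𝓝 0) :=
    (tendsto_biSup_edist_of_continuous hVc hF hfin x₀).comp tendsto_snd
  have hcentre : Tendsto (fun q : ι × X =>
      edist (∫⁻ y in V, F x₀ y ∂μs q.1) (∫⁻ y in V, F x₀ y ∂μ)) (l ×ˢ 𝓝 x₀) (𝓝 0) :=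
    (tendsto_ennreal_edist_zero (h.tendsto_setLIntegral (hFx x₀) (hfin x₀) hV hVc hfr)
      tendsto_const_nhds (setLIntegral_ne_top_of_continuous (hFx x₀) (hfin x₀) hVc)).comp
      tendsto_fst
  have hbound : Tendsto (fun q : ι × X => η q.2 * μs q.1 V +
      edist (∫⁻ y in V, F x₀ y ∂μs q.1) (∫⁻ y in V, F x₀ y ∂μ) + η q.2 * μ V)
      (l ×ˢ 𝓝 x₀) (𝓝 0) := by
    have hn := ENNReal.Tendsto.mul hη0 (.inr hμV)
      ((h.tendsto_measure hV hVc hfr).comp tendsto_fst) (.inr zero_ne_top)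
    have hlim := ENNReal.Tendsto.mul_const hη0 (.inr hμV)
    simpa using (hn.add hcentre).add hlim
  exact tendsto_of_tendsto_of_tendsto_of_le_of_le tendsto_const_nhds hbound
    (fun _ => zero_le) fun q => edist_setLIntegral_le_add_edist_add _ _ hV subset_closure
      (hFx q.2).measurable (hFx x₀).measurable

lemma lintegral_setLIntegral_le_liminf [LocallyCompactSpace S] {μs : ℕ → Measure S}
    [∀ n, IsFiniteMeasureOnCompacts (μs n)] [∀ n, SFinite (μs n)]
    (h : VagueTendsto μs atTop μ) {T : Type*} [MeasurableSpace T] {ρ : Measure T}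
    {f : T → S → ℝ≥0∞} (hmeas : Measurable (Function.uncurry f))
    (hf : ∀ᵐ t ∂ρ, Continuous (f t) ∧ ∀ y, f t y ≠ ⊤) {V : Set S} (hV : MeasurableSet V)
    (hVc : IsCompact (closure V)) (hfr : μ (frontier V) = 0) :
    ∫⁻ t, ∫⁻ y in V, f t y ∂μ ∂ρ ≤ liminf (fun n => ∫⁻ t, ∫⁻ y in V, f t y ∂μs n ∂ρ) atTop :=
  calc
    ∫⁻ t, ∫⁻ y in V, f t y ∂μ ∂ρ = ∫⁻ t, liminf (fun n => ∫⁻ y in V, f t y ∂μs n) atTop ∂ρ :=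
      lintegral_congr_ae <| hf.mono fun _ ht =>
        (h.tendsto_setLIntegral ht.1 ht.2 hV hVc hfr).liminf_eq.symm
    _ ≤ liminf (fun n => ∫⁻ t, ∫⁻ y in V, f t y ∂μs n ∂ρ) atTop :=
      lintegral_liminf_le fun _ => hmeas.lintegral_prod_right'

end VagueTendsto

end Vague

section Exhaustion

variable {S : Type*} [TopologicalSpace S] [MeasurableSpace S] [OpensMeasurableSpace S]
  [TopologicalSpace.PseudoMetrizableSpace S] (μ : Measure S) [SFinite μ]

lemma exists_isOpen_null_frontier_between {K U : Set S} (hK : IsCompact K) (hU : IsOpen U)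
    (hKU : K ⊆ U) :
    ∃ V, IsOpen V ∧ K ⊆ V ∧ V ⊆ U ∧ μ (frontier V) = 0 := by
  let _ := TopologicalSpace.pseudoMetrizableSpacePseudoMetric S
  obtain ⟨δ, hδ, hδU⟩ := hK.exists_thickening_subset_open hU hKU
  obtain ⟨r, ⟨hr, hrδ⟩, hμ⟩ := exists_null_frontier_thickening μ K hδ
  exact ⟨Metric.thickening r K, Metric.isOpen_thickening, Metric.self_subset_thickening hr K,
    (Metric.thickening_mono hrδ.le K).trans hδU, hμ⟩

lemma exists_monotone_isOpen_null_frontier_cover [WeaklyLocallyCompactSpace S]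
    [SigmaCompactSpace S] :
    ∃ V : ℕ → Set S, (∀ k, IsOpen (V k)) ∧ (∀ k, IsCompact (closure (V k))) ∧ Monotone V ∧
      ⋃ k, V k = univ ∧ ∀ k, μ (frontier (V k)) = 0 := by
  let E := CompactExhaustion.choice S
  choose V hopen hEV hVE hfr using fun k =>
    exists_isOpen_null_frontier_between μ (E.isCompact k) isOpen_interior
      (E.subset_interior_succ k)
  have hVsucc (k : ℕ) : V k ⊆ E (k + 1) := (hVE k).trans interior_subset
  refine ⟨V, hopen, fun k => (E.isCompact (k + 1)).closure_of_subset (hVsucc k),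
    monotone_nat_of_le_succ fun k => (hVsucc k).trans (hEV (k + 1)), ?_, hfr⟩
  exact univ_subset_iff.1 (E.iUnion_eq ▸ iUnion_mono hEV)

end Exhaustion

section SubMarkovDensity

variable {S : Type*} [MeasurableSpace S]

/-- Transition densities `p_t(x,y)`, `t > 0`, of a symmetric sub-Markov semigroup with respect to
the reference measure `m`; values at times `t ≤ 0` carry no information. -/
structure IsSymmSubMarkovDensity (m : Measure S) (p : ℝ → S → S → ℝ≥0∞) : Prop where
  measurable : Measurable fun q : ℝ × S × S => p q.1 q.2.1 q.2.2
  symm : ∀ t > (0 : ℝ), ∀ x y, p t x y = p t y x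
  chapmanKolmogorov : ∀ s > (0 : ℝ), ∀ t > (0 : ℝ), ∀ x y,
    p (t + s) x y = ∫⁻ z, p t x z * p s z y ∂m
  lintegral_le_one : ∀ t > (0 : ℝ), ∀ x, ∫⁻ y, p t x y ∂m ≤ 1

lemma ennreal_two_mul_mul_le_sq_add_sq (a b : ℝ≥0∞) : 2 * (a * b) ≤ a ^ 2 + b ^ 2 := by
  rcases eq_or_ne a ⊤ with rfl | ha
  · simp
  rcases eq_or_ne b ⊤ with rfl | hb
  · simp
  lift a to NNReal using ha
  lift b to NNReal using hb
  rw [← mul_assoc]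
  exact_mod_cast two_mul_le_add_sq a b

lemma two_mul_lintegral_kernel_le {T : Type*} [MeasurableSpace T] {μ : Measure S} {ν : Measure T}
    [SFinite μ] [SFinite ν] {k : S → T → ℝ≥0∞} (hk : Measurable (Function.uncurry k))
    (hrow : ∀ x, ∫⁻ y, k x y ∂ν ≤ 1) (hcol : ∀ y, ∫⁻ x, k x y ∂μ ≤ 1)
    {a : S → ℝ≥0∞} (ha : Measurable a) {b : T → ℝ≥0∞} (hb : Measurable b) :
    2 * ∫⁻ x, ∫⁻ y, a x * (k x y * b y) ∂ν ∂μ ≤ ∫⁻ x, a x ^ 2 ∂μ + ∫⁻ y, b y ^ 2 ∂ν := by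
  have hka : Measurable fun q : S × T => k q.1 q.2 * a q.1 ^ 2 := hk.mul (by fun_prop)
  have hkb : Measurable fun q : S × T => k q.1 q.2 * b q.2 ^ 2 := hk.mul (by fun_prop)
  have hab : Measurable fun q : S × T => a q.1 * (k q.1 q.2 * b q.2) :=
    (ha.comp measurable_fst).mul (hk.mul (hb.comp measurable_snd))
  have hpointwise (x : S) (y : T) :
      2 * (a x * (k x y * b y)) ≤ k x y * a x ^ 2 + k x y * b y ^ 2 :=
    calc
      2 * (a x * (k x y * b y)) = k x y * (2 * (a x * b y)) := by ring
      _ ≤ k x y * (a x ^ 2 + b y ^ 2) := by gcongr; exact ennreal_two_mul_mul_le_sq_add_sq _ _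
      _ = k x y * a x ^ 2 + k x y * b y ^ 2 := mul_add _ _ _
  have hrow_sq : ∫⁻ x, ∫⁻ y, k x y * a x ^ 2 ∂ν ∂μ ≤ ∫⁻ x, a x ^ 2 ∂μ :=
    lintegral_mono fun x => by
      rw [lintegral_mul_const _ hk.of_uncurry_left]
      exact mul_le_of_le_one_left zero_le (hrow x)
  have hcol_sq : ∫⁻ x, ∫⁻ y, k x y * b y ^ 2 ∂ν ∂μ ≤ ∫⁻ y, b y ^ 2 ∂ν := by
    rw [lintegral_lintegral_swap hkb.aemeasurable]
    refine lintegral_mono fun y => ?_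
    rw [lintegral_mul_const _ hk.of_uncurry_right]
    exact mul_le_of_le_one_left zero_le (hcol y)
  calc
    2 * ∫⁻ x, ∫⁻ y, a x * (k x y * b y) ∂ν ∂μ
        = ∫⁻ q, 2 * (a q.1 * (k q.1 q.2 * b q.2)) ∂μ.prod ν := by
          rw [lintegral_const_mul _ hab, lintegral_prod _ hab.aemeasurable]
    _ ≤ ∫⁻ q, (k q.1 q.2 * a q.1 ^ 2 + k q.1 q.2 * b q.2 ^ 2) ∂μ.prod ν :=
        lintegral_mono fun q => hpointwise q.1 q.2
    _ = ∫⁻ x, ∫⁻ y, k x y * a x ^ 2 ∂ν ∂μ + ∫⁻ x, ∫⁻ y, k x y * b y ^ 2 ∂ν ∂μ := by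
        rw [lintegral_add_left hka, lintegral_prod _ hka.aemeasurable,
          lintegral_prod _ hkb.aemeasurable]
    _ ≤ ∫⁻ x, a x ^ 2 ∂μ + ∫⁻ y, b y ^ 2 ∂ν := add_le_add hrow_sq hcol_sq

namespace IsSymmSubMarkovDensity

variable {m : Measure S} {p : ℝ → S → S → ℝ≥0∞}

lemma lintegral_sq_eq (hp : IsSymmSubMarkovDensity m p) {t : ℝ} (ht : 0 < t) (x : S) :
    ∫⁻ z, p t x z ^ 2 ∂m = p (t + t) x x := by
  rw [hp.chapmanKolmogorov t ht t ht]
  exact lintegral_congr fun z => by rw [sq, hp.symm t ht z x]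

lemma two_mul_le_diag_add_diag [SFinite m] (hp : IsSymmSubMarkovDensity m p) {v u : ℝ}
    (hv : 0 < v) (hvu : v < u) (x y : S) : 2 * p u x y ≤ p v x x + p v y y := by
  obtain ⟨t, rfl⟩ : ∃ t, v = t + t := ⟨v / 2, (add_halves v).symm⟩
  obtain ⟨s, rfl⟩ : ∃ s, u = t + (s + t) := ⟨u - (t + t), by ring⟩
  have ht : 0 < t := by linarith
  have hs : 0 < s := by linarith
  have hmeas (r : ℝ) : Measurable (Function.uncurry (p r)) :=
    hp.measurable.comp measurable_prodMk_left
  have hfactor : p (t + (s + t)) x y = ∫⁻ w, ∫⁻ w', p t x w * (p s w w' * p t y w') ∂m ∂m := by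
    rw [hp.chapmanKolmogorov (s + t) (by linarith) t ht]
    refine lintegral_congr fun w => ?_
    rw [hp.chapmanKolmogorov t ht s hs, ← lintegral_const_mul]
    · exact lintegral_congr fun w' => by rw [hp.symm t ht w' y]
    · exact (hmeas s).of_uncurry_left.mul (hmeas t).of_uncurry_right
  rw [hfactor, ← hp.lintegral_sq_eq ht, ← hp.lintegral_sq_eq ht]
  exact two_mul_lintegral_kernel_le (hmeas s) (hp.lintegral_le_one s hs)
    (fun w' => by simpa only [hp.symm s hs _ w'] using hp.lintegral_le_one s hs w')
    (hmeas t).of_uncurry_left (hmeas t).of_uncurry_left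

lemma le_diag_add_diag [SFinite m] (hp : IsSymmSubMarkovDensity m p) {v u : ℝ}
    (hv : 0 < v) (hvu : v < u) (x y : S) : p u x y ≤ p v x x + p v y y :=
  (le_mul_of_one_le_left zero_le one_le_two).trans (hp.two_mul_le_diag_add_diag hv hvu x y)

end IsSymmSubMarkovDensity

end SubMarkovDensity

section PotDensityOn

variable {S : Type*}

/-- The contribution `∫_T e^{-αt} p_t(x,y) dt` of the times in `T` to the potential density
`R_α(x,y)`; it is used with `T = (0,δ)` and `T = [δ,∞)`. -/
noncomputable def potDensityOn (p : ℝ → S → S → ℝ≥0∞) (α : ℝ) (T : Set ℝ) (x y : S) : ℝ≥0∞ :=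
  ∫⁻ t in T, ENNReal.ofReal (Real.exp (-α * t)) * p t x y

lemma potDensity_eq_potDensityOn_add (p : ℝ → S → S → ℝ≥0∞) (α : ℝ) {δ : ℝ} (hδ : 0 < δ)
    (x y : S) :
    potDensity p α x y = potDensityOn p α (Ioo 0 δ) x y + potDensityOn p α (Ici δ) x y := by
  rw [potDensity, ← Ioo_union_Ici_eq_Ioi hδ, lintegral_union measurableSet_Ici]
  · rfl
  · exact disjoint_left.2 fun t ht ht' => ht.2.not_ge ht'

lemma lintegral_Ici_exp_neg_ne_top {α : ℝ} (hα : 0 < α) (δ : ℝ) :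
    ∫⁻ t in Ici δ, ENNReal.ofReal (Real.exp (-α * t)) ≠ ⊤ :=
  have hint : IntegrableOn (fun t => Real.exp (-α * t)) (Ici δ) :=
    (integrableOn_Ici_iff_integrableOn_Ioi (by simp)).2 (exp_neg_integrableOn_Ioi δ hα)
  hint.lintegral_lt_top.ne

variable [MeasurableSpace S]

lemma measurable_potDensityOn {p : ℝ → S → S → ℝ≥0∞}
    (hp : Measurable fun q : ℝ × S × S => p q.1 q.2.1 q.2.2) (α : ℝ) (T : Set ℝ) (x : S) :
    Measurable (potDensityOn p α T x) := by
  have hpx : Measurable fun q : S × ℝ => p q.2 x q.1 :=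
    hp.comp (f := fun q : S × ℝ => (q.2, x, q.1)) (by fun_prop)
  exact Measurable.lintegral_prod_right'
    (f := fun q : S × ℝ => ENNReal.ofReal (Real.exp (-α * q.2)) * p q.2 x q.1)
    (Measurable.mul (by fun_prop) hpx)

lemma potential_restrict_eq_add {p : ℝ → S → S → ℝ≥0∞}
    (hp : Measurable fun q : ℝ × S × S => p q.1 q.2.1 q.2.2) (α : ℝ) {δ : ℝ} (hδ : 0 < δ)
    (ν : Measure S) (V : Set S) (x : S) :
    potential p α (ν.restrict V) x =
      ∫⁻ y in V, potDensityOn p α (Ioo 0 δ) x y ∂ν +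
        ∫⁻ y in V, potDensityOn p α (Ici δ) x y ∂ν := by
  rw [← lintegral_add_left (measurable_potDensityOn hp α _ x)]
  exact lintegral_congr fun y => potDensity_eq_potDensityOn_add p α hδ x y

lemma lintegral_potDensityOn_Ioo_le {p : ℝ → S → S → ℝ≥0∞}
    (hp : Measurable fun q : ℝ × S × S => p q.1 q.2.1 q.2.2) {α : ℝ} (hα : 0 ≤ α) (δ : ℝ)
    (ν : Measure S) [SFinite ν] (x : S) :
    ∫⁻ y, potDensityOn p α (Ioo 0 δ) x y ∂ν ≤ ∫⁻ t in Ioo 0 δ, ∫⁻ y, p t x y ∂ν := by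
  have hpx : Measurable fun q : ℝ × S => p q.1 x q.2 :=
    hp.comp (f := fun q : ℝ × S => (q.1, x, q.2)) (by fun_prop)
  rw [lintegral_lintegral_swap hpx.aemeasurable]
  refine lintegral_mono fun y => setLIntegral_mono' measurableSet_Ioo fun t ht => ?_
  refine mul_le_of_le_one_left zero_le (ENNReal.ofReal_le_one.2 (Real.exp_le_one_iff.2 ?_))
  nlinarith [ht.1]

end PotDensityOn

section Tail

variable {S : Type*} [MeasurableSpace S] {m : Measure S} [SFinite m]
  {p : ℝ → S → S → ℝ≥0∞} {α δ : ℝ}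

namespace IsSymmSubMarkovDensity

lemma potDensityOn_Ici_ne_top (hp : IsSymmSubMarkovDensity m p)
    (hfin : ∀ t > 0, ∀ x y, p t x y ≠ ⊤) (hα : 0 < α) (hδ : 0 < δ) (x y : S) :
    potDensityOn p α (Ici δ) x y ≠ ⊤ := by
  have hdiag : p (δ / 2) x x + p (δ / 2) y y ≠ ⊤ :=
    add_ne_top.2 ⟨hfin _ (half_pos hδ) x x, hfin _ (half_pos hδ) y y⟩
  refine ne_top_of_le_ne_top (mul_ne_top (lintegral_Ici_exp_neg_ne_top hα δ) hdiag) ?_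
  rw [← lintegral_mul_const _ (by fun_prop)]
  refine setLIntegral_mono' measurableSet_Ici fun t ht => ?_
  gcongr
  exact hp.le_diag_add_diag (half_pos hδ) ((half_lt_self hδ).trans_le ht) x y

lemma continuous_potDensityOn_Ici [TopologicalSpace S] [FirstCountableTopology S]
    (hp : IsSymmSubMarkovDensity m p)
    (hcont : ∀ t > 0, Continuous (Function.uncurry (p t)))
    (hfin : ∀ t > 0, ∀ x y, p t x y ≠ ⊤) (hα : 0 < α) (hδ : 0 < δ) :
    Continuous (Function.uncurry (potDensityOn p α (Ici δ))) := by
  refine continuous_iff_continuousAt.2 fun z₀ => ?_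
  let D (z : S × S) : ℝ≥0∞ := p (δ / 2) z.1 z.1 + p (δ / 2) z.2 z.2
  have hdiag : Continuous fun x => p (δ / 2) x x :=
    (hcont _ (half_pos hδ)).comp (continuous_id.prodMk continuous_id)
  have hD : Continuous D := (hdiag.comp continuous_fst).add (hdiag.comp continuous_snd)
  have hDfin : D z₀ ≠ ⊤ := add_ne_top.2 ⟨hfin _ (half_pos hδ) _ _, hfin _ (half_pos hδ) _ _⟩
  have hD_lt : ∀ᶠ z in 𝓝 z₀, D z < D z₀ + 1 :=
    hD.continuousAt.eventually_lt continuousAt_const (ENNReal.lt_add_right hDfin one_ne_zero)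
  refine tendsto_lintegral_filter_of_dominated_convergence
    (fun t => ENNReal.ofReal (Real.exp (-α * t)) * (D z₀ + 1)) ?_ ?_ ?_ ?_
  · refine Eventually.of_forall fun z => Measurable.mul (by fun_prop) ?_
    exact hp.measurable.comp measurable_prodMk_right
  · filter_upwards [hD_lt] with z hz
    filter_upwards [ae_restrict_mem measurableSet_Ici] with t ht
    gcongr
    exact (hp.le_diag_add_diag (half_pos hδ) ((half_lt_self hδ).trans_le ht) _ _).trans hz.le
  · rw [lintegral_mul_const _ (by fun_prop)]
    exact mul_ne_top (lintegral_Ici_exp_neg_ne_top hα δ) (add_ne_top.2 ⟨hDfin, one_ne_top⟩)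
  · filter_upwards [ae_restrict_mem measurableSet_Ici] with t ht
    exact ENNReal.Tendsto.const_mul ((hcont t (hδ.trans_le ht)).tendsto z₀) (.inr ofReal_ne_top)

end IsSymmSubMarkovDensity

end Tail

section UniformConvergence

variable {S : Type*} [TopologicalSpace S] [LocallyCompactSpace S]
  [TopologicalSpace.PseudoMetrizableSpace S] [MeasurableSpace S] [BorelSpace S]
  {p : ℝ → S → S → ℝ≥0∞} {α : ℝ} {μs : ℕ → Measure S} {μ : Measure S}
  [∀ n, IsFiniteMeasureOnCompacts (μs n)] [IsFiniteMeasureOnCompacts μ]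
  [∀ n, SFinite (μs n)] [SFinite μ] {V K : Set S}

lemma exists_lintegral_potDensityOn_Ioo_le
    (hp : Measurable fun q : ℝ × S × S => p q.1 q.2.1 q.2.2)
    (hcont : ∀ t > 0, Continuous (Function.uncurry (p t)))
    (hfin : ∀ t > 0, ∀ x y, p t x y ≠ ⊤) (hα : 0 ≤ α) (hvague : VagueTendsto μs atTop μ)
    (hV : MeasurableSet V) (hVc : IsCompact (closure V)) (hfr : μ (frontier V) = 0)
    (hshort : Tendsto (fun t : ℝ => ⨆ n, ⨆ x ∈ K, ∫⁻ s in Ioo 0 t, ∫⁻ y in V, p s x y ∂μs n)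
      (𝓝[>] 0) (𝓝 0)) {ε : ℝ≥0∞} (hε : 0 < ε) :
    ∃ δ > 0, ∀ x ∈ K, (∀ n, ∫⁻ y in V, potDensityOn p α (Ioo 0 δ) x y ∂μs n ≤ ε) ∧
      ∫⁻ y in V, potDensityOn p α (Ioo 0 δ) x y ∂μ ≤ ε := by
  obtain ⟨δ, hδε, hδ : 0 < δ⟩ :=
    ((ENNReal.tendsto_nhds_zero.1 hshort ε hε).and self_mem_nhdsWithin).exists
  refine ⟨δ, hδ, fun x hx => ?_⟩
  have hμs (n : ℕ) : ∫⁻ s in Ioo 0 δ, ∫⁻ y in V, p s x y ∂μs n ≤ ε :=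
    iSup₂_le_iff.1 (iSup_le_iff.1 hδε n) x hx
  have hμ : ∫⁻ s in Ioo 0 δ, ∫⁻ y in V, p s x y ∂μ ≤ ε := by
    have hpx : Measurable fun q : ℝ × S => p q.1 x q.2 :=
      hp.comp (f := fun q : ℝ × S => (q.1, x, q.2)) (by fun_prop)
    refine (hvague.lintegral_setLIntegral_le_liminf hpx ?_ hV hVc hfr).trans
      (liminf_le_of_frequently_le' (Frequently.of_forall hμs))
    filter_upwards [ae_restrict_mem measurableSet_Ioo] with s hs
    exact ⟨(hcont s hs.1).comp (Continuous.prodMk_right x), hfin s hs.1 x⟩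
  exact ⟨fun n => (lintegral_potDensityOn_Ioo_le hp hα δ _ x).trans (hμs n),
    (lintegral_potDensityOn_Ioo_le hp hα δ _ x).trans hμ⟩

lemma IsSymmSubMarkovDensity.tendsto_biSup_edist_potential {m : Measure S} [SFinite m]
    (hp : IsSymmSubMarkovDensity m p) (hcont : ∀ t > 0, Continuous (Function.uncurry (p t)))
    (hfin : ∀ t > 0, ∀ x y, p t x y ≠ ⊤) (hα : 0 < α) (hvague : VagueTendsto μs atTop μ)
    (hV : MeasurableSet V) (hVc : IsCompact (closure V)) (hfr : μ (frontier V) = 0)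
    (hK : IsCompact K)
    (hshort : Tendsto (fun t : ℝ => ⨆ n, ⨆ x ∈ K, ∫⁻ s in Ioo 0 t, ∫⁻ y in V, p s x y ∂μs n)
      (𝓝[>] 0) (𝓝 0)) :
    Tendsto (fun n => ⨆ x ∈ K,
      edist (potential p α ((μs n).restrict V) x) (potential p α (μ.restrict V) x))
      atTop (𝓝 0) := by
  refine ENNReal.tendsto_nhds_zero.2 fun ε hε => ?_
  obtain ⟨δ, hδ, hδε⟩ := exists_lintegral_potDensityOn_Ioo_le hp.measurable hcont hfin hα.le hvague
    hV hVc hfr hshort (ENNReal.half_pos hε.ne')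
  have htail := hvague.tendsto_biSup_edist_setLIntegral
    (hp.continuous_potDensityOn_Ici hcont hfin hα hδ)
    (hp.potDensityOn_Ici_ne_top hfin hα hδ) hV hVc hfr hK
  filter_upwards [ENNReal.tendsto_nhds_zero.1 htail _ (ENNReal.half_pos hε.ne')] with n hn
  refine iSup₂_le fun x hx => ?_
  obtain ⟨hμs, hμ⟩ := hδε x hx
  simp only [potential_restrict_eq_add hp.measurable α hδ]
  calc
    _ ≤ edist (∫⁻ y in V, potDensityOn p α (Ioo 0 δ) x y ∂μs n)
          (∫⁻ y in V, potDensityOn p α (Ioo 0 δ) x y ∂μ) +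
        edist (∫⁻ y in V, potDensityOn p α (Ici δ) x y ∂μs n)
          (∫⁻ y in V, potDensityOn p α (Ici δ) x y ∂μ) := ennreal_edist_add_add_le _ _ _ _
    _ ≤ ε / 2 + ε / 2 := add_le_add
        ((ennreal_edist_le_max _ _).trans (max_le (hμs n) hμ)) (iSup₂_le_iff.1 hn x hx)
    _ = ε := ENNReal.add_halves ε

lemma essSup_le_biSup {T : Type*} [MeasurableSpace T] {ν : Measure T} {s : Set T}
    (hs : ∀ᵐ x ∂ν, x ∈ s) (f : T → ℝ≥0∞) : essSup f ν ≤ ⨆ x ∈ s, f x :=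
  essSup_le_of_ae_le _ (hs.mono fun x hx => le_iSup₂ (f := fun x _ => f x) x hx)

end UniformConvergence

theorem sufficient_condition_general_assumption_general {S : Type*} [TopologicalSpace S]
    [LocallyCompactSpace S] [SecondCountableTopology S] [TopologicalSpace.PseudoMetrizableSpace S]
    [MeasurableSpace S] [BorelSpace S] {m : Measure S} [SFinite m] {p : ℝ → S → S → ℝ≥0∞}
    (hp : IsSymmSubMarkovDensity m p) (hcont : ∀ t > 0, Continuous (Function.uncurry (p t)))
    (hfin : ∀ t > 0, ∀ x y, p t x y ≠ ⊤) {α : ℝ} (hα : 0 < α) {μ : Measure S}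
    {μs : ℕ → Measure S} [IsFiniteMeasureOnCompacts μ] [∀ n, IsFiniteMeasureOnCompacts (μs n)]
    (hvague : VagueTendsto μs atTop μ)
    (hshort : ∀ K : Set S, IsCompact K →
      Tendsto (fun t : ℝ => ⨆ n, ⨆ x ∈ K, ∫⁻ s in Ioo 0 t, ∫⁻ y in K, p s x y ∂μs n)
        (𝓝[>] 0) (𝓝 0)) :
    ∃ V : ℕ → Set S, (∀ k, IsOpen (V k)) ∧ (∀ k, IsCompact (closure (V k))) ∧ Monotone V ∧
      ⋃ k, V k = univ ∧ ∀ k,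
        Tendsto (fun n => ⨆ x ∈ closure (V k), edist (potential p α ((μs n).restrict (V k)) x)
          (potential p α (μ.restrict (V k)) x)) atTop (𝓝 0) ∧
        Tendsto (fun n => essSup (fun x => edist (potential p α ((μs n).restrict (V k)) x)
          (potential p α (μ.restrict (V k)) x)) ((μs n).restrict (V k) + μ.restrict (V k)))
          atTop (𝓝 0) := by
  obtain ⟨V, hopen, hVc, hmono, hcover, hfr⟩ := exists_monotone_isOpen_null_frontier_cover μ
  refine ⟨V, hopen, hVc, hmono, hcover, fun k => ?_⟩
  have hshortV : Tendsto (fun t : ℝ => ⨆ n, ⨆ x ∈ closure (V k),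
      ∫⁻ s in Ioo 0 t, ∫⁻ y in V k, p s x y ∂μs n) (𝓝[>] 0) (𝓝 0) := by
    refine tendsto_of_tendsto_of_tendsto_of_le_of_le tendsto_const_nhds (hshort _ (hVc k))
      (fun _ => zero_le) fun t => ?_
    dsimp only
    gcongr
    exact subset_closure
  have hunif := hp.tendsto_biSup_edist_potential hcont hfin hα hvague (hopen k).measurableSet
    (hVc k) (hfr k) (hVc k) hshortV
  refine ⟨hunif, tendsto_of_tendsto_of_tendsto_of_le_of_le tendsto_const_nhds hunif
    (fun _ => zero_le) fun n => essSup_le_biSup ?_ _⟩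
  have hmem (ν : Measure S) : ∀ᵐ x ∂ν.restrict (V k), x ∈ closure (V k) :=
    (ae_restrict_mem (hopen k).measurableSet).mono fun _ => (subset_closure ·)
  exact ae_add_measure_iff.2 ⟨hmem _, hmem _⟩

/-- Under (B1) joint continuity of `p`, (B2) vague convergence `μ_n → μ` of Radon measures,
and (B3) uniform short-time control on compacts, there is an increasing sequence `(V_k)` of
relatively compact open sets with union `S` such that for each `k`, the `1`-potentials of the
restricted measures converge uniformly on `closure (V_k)`; in particular
`‖G_1μ_n^{V_k} − G_1μ^{V_k}‖_{L^∞(μ_n^{V_k}+μ^{V_k})} → 0` for every `k`. (Absolute differences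
of `[0,∞]`-valued quantities are expressed as `max (a - b) (b - a)`.) -/
theorem sufficient_condition_general_assumption
    {S : Type*} [TopologicalSpace S] [LocallyCompactSpace S]
    [TopologicalSpace.SeparableSpace S] [TopologicalSpace.MetrizableSpace S]
    [MeasurableSpace S] [BorelSpace S]
    (m : Measure S) [SigmaFinite m] [IsFiniteMeasureOnCompacts m]
    (hfull : ∀ U : Set S, IsOpen U → U.Nonempty → 0 < m U)
    (p : ℝ → S → S → ℝ≥0∞)
    (hp_meas : Measurable fun q : ℝ × S × S => p q.1 q.2.1 q.2.2)
    (hsymm : ∀ t > (0 : ℝ), ∀ x y : S, p t x y = p t y x)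
    (hCK : ∀ s > (0 : ℝ), ∀ t > (0 : ℝ), ∀ x y : S,
      p (t + s) x y = ∫⁻ z, p t x z * p s z y ∂m)
    (hsub : ∀ t > (0 : ℝ), ∀ x : S, (∫⁻ y, p t x y ∂m) ≤ 1)
    -- (B1)
    (hp_cont : ContinuousOn (fun q : ℝ × S × S => p q.1 q.2.1 q.2.2)
      {q : ℝ × S × S | 0 < q.1})
    (hp_fin : ∀ t > (0 : ℝ), ∀ x y : S, p t x y ≠ ⊤)
    -- (B2) Radon measures converging vaguely
    (μ : Measure S) (μseq : ℕ → Measure S)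
    [IsFiniteMeasureOnCompacts μ] [∀ n, IsFiniteMeasureOnCompacts (μseq n)]
    [μ.InnerRegular] [∀ n, (μseq n).InnerRegular]
    (hvague : ∀ f : S → ℝ, Continuous f → HasCompactSupport f →
      Filter.Tendsto (fun n => ∫ x, f x ∂(μseq n)) Filter.atTop (nhds (∫ x, f x ∂μ)))
    -- (B3)
    (hshort : ∀ K : Set S, IsCompact K →
      Filter.Tendsto
        (fun t : ℝ => ⨆ n, ⨆ x ∈ K, ∫⁻ s in Set.Ioo (0 : ℝ) t, ∫⁻ y in K, p s x y ∂(μseq n))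
        (nhdsWithin 0 (Set.Ioi 0)) (nhds 0)) :
    ∃ V : ℕ → Set S,
      (∀ k, IsOpen (V k)) ∧ (∀ k, IsCompact (closure (V k))) ∧ Monotone V
      ∧ (⋃ k, V k) = Set.univ
      ∧ ∀ k,
        Filter.Tendsto
          (fun n => ⨆ x ∈ closure (V k),
            max (potential p 1 ((μseq n).restrict (V k)) x
                  - potential p 1 (μ.restrict (V k)) x)
                (potential p 1 (μ.restrict (V k)) x
                  - potential p 1 ((μseq n).restrict (V k)) x))
          Filter.atTop (nhds 0)
        ∧ Filter.Tendsto
            (fun n => essSup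
              (fun x => max (potential p 1 ((μseq n).restrict (V k)) x
                    - potential p 1 (μ.restrict (V k)) x)
                  (potential p 1 (μ.restrict (V k)) x
                    - potential p 1 ((μseq n).restrict (V k)) x))
              ((μseq n).restrict (V k) + μ.restrict (V k)))
            Filter.atTop (nhds 0) := by
  let _ := TopologicalSpace.metrizableSpaceMetric S
  have := UniformSpace.secondCountable_of_separable S
  simpa only [ennreal_edist_eq_max_tsub] using sufficient_condition_general_assumption_general
    ⟨hp_meas, hsymm, hCK, hsub⟩
    (fun t ht => hp_cont.comp_continuous (f := fun z : S × S => (t, z)) (by fun_prop) fun _ => ht)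
    hp_fin one_pos hvague hshort
end
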